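/- For every n ∈ {1,2,3} and every s > 0 there exists a constant C > 0 such that for all p ∈ ℝ³: ∫_{ℝ³} |k|^n B₀(k)² ω(k)^{2−2s} ω(p−k)^{−n} dk ≤ C; i.e., the left-hand side is bounded uniformly in p. -/

import Mathlib

open MeasureTheory

noncomputable section

/-- The dispersion relation `ω(k) = √(1+|k|²)` of the massive scalar field. -/
def ω (k : EuclideanSpace ℝ (Fin 3)) : ℝ := Real.sqrt (1 + ‖k‖ ^ 2)

/-- The Gross dressing form factor `B₀(k) = 1/(√(ω(k))·(|k|²+ω(k)))`. -/
def B0 (k : EuclideanSpace ℝ (Fin 3)) : ℝ := 1 / (Real.sqrt (ω k) * (‖k‖ ^ 2 + ω k))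

lemma one_le_om (k : EuclideanSpace ℝ (Fin 3)) : 1 ≤ ω k := by
  unfold ω
  rw [Real.one_le_sqrt]
  nlinarith [sq_nonneg ‖k‖]

lemma om_sq (k : EuclideanSpace ℝ (Fin 3)) : ω k ^ 2 = 1 + ‖k‖ ^ 2 := by
  unfold ω
  rw [Real.sq_sqrt (by positivity)]

lemma two_bound (u v a b : ℝ) (hu : 1 ≤ u) (hv : 1 ≤ v) (ha : 0 ≤ a) (hb : 0 ≤ b) :
    u ^ (-a) * v ^ (-b) ≤ u ^ (-(a + b)) + v ^ (-(a + b)) := by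
  have hu0 : 0 < u := by linarith
  have hv0 : 0 < v := by linarith
  have e : ∀ x : ℝ, 0 < x → x ^ (-(a + b)) = x ^ (-a) * x ^ (-b) := by
    intro x hx
    rw [← Real.rpow_add hx]; congr 1; ring
  have pu := Real.rpow_pos_of_pos hu0 (-(a + b))
  have pv := Real.rpow_pos_of_pos hv0 (-(a + b))
  rcases le_total u v with h | h
  · have h1 : v ^ (-b) ≤ u ^ (-b) := Real.rpow_le_rpow_of_nonpos hu0 h (by linarith)
    have := mul_le_mul_of_nonneg_left h1 (Real.rpow_pos_of_pos hu0 (-a)).le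
    rw [← e u hu0] at this
    linarith
  · have h1 : u ^ (-a) ≤ v ^ (-a) := Real.rpow_le_rpow_of_nonpos hv0 h (by linarith)
    have := mul_le_mul_of_nonneg_right h1 (Real.rpow_pos_of_pos hv0 (-b)).le
    rw [← e v hv0] at this
    linarith

lemma B0_sq_le (k : EuclideanSpace ℝ (Fin 3)) : B0 k ^ 2 ≤ ω k ^ (-5 : ℝ) := by
  have h1 := one_le_om k
  have h0 : 0 < ω k := by linarith
  have h2 := om_sq k
  unfold B0
  rw [div_pow, mul_pow, Real.sq_sqrt h0.le, one_pow, Real.rpow_neg h0.le, one_div]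
  apply inv_anti₀ (by positivity)
  have h5 : ω k ^ (5 : ℝ) = ω k * (ω k ^ 2) ^ 2 := by
    rw [show (5 : ℝ) = ((5 : ℕ) : ℝ) by norm_num, Real.rpow_natCast]; ring
  rw [h5]
  gcongr
  linarith

lemma pointwise (n : ℕ) (hn : n ≤ 3) (s : ℝ) (hs : 0 < s) (p k : EuclideanSpace ℝ (Fin 3)) :
    ‖k‖ ^ n * B0 k ^ 2 * ω k ^ (2 - 2 * s) * ω (p - k) ^ (-(n : ℝ)) ≤
      ω k ^ (-(3 + 2 * s)) + ω (p - k) ^ (-(3 + 2 * s)) := by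
  have h1 := one_le_om k
  have h0 : 0 < ω k := by linarith
  have h1' := one_le_om (p - k)
  have h0' : 0 < ω (p - k) := by linarith
  have hk : ‖k‖ ≤ ω k := by
    apply Real.le_sqrt_of_sq_le; linarith
  have hnn : (n : ℝ) ≤ 3 := by exact_mod_cast hn
  have key := two_bound (ω k) (ω (p - k)) (3 + 2 * s - n) n h1 h1' (by linarith) (by positivity)
  rw [sub_add_cancel] at key
  refine le_trans ?_ key
  have e : ω k ^ (-(3 + 2 * s - (n : ℝ))) = ω k ^ n * ω k ^ (-5 : ℝ) * ω k ^ (2 - 2 * s) := by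
    rw [← Real.rpow_natCast (ω k) n, ← Real.rpow_add h0, ← Real.rpow_add h0]
    congr 1; ring
  rw [e]
  have := B0_sq_le k
  gcongr

lemma om_int (s : ℝ) (hs : 0 < s) :
    Integrable (fun k : EuclideanSpace ℝ (Fin 3) => ω k ^ (-(3 + 2 * s))) := by
  have h := integrable_rpow_neg_one_add_norm_sq (E := EuclideanSpace ℝ (Fin 3)) (μ := volume)
    (r := 3 + 2 * s) (by simp; linarith)
  refine h.congr (Filter.Eventually.of_forall fun k => ?_)
  simp only [ω]
  rw [Real.sqrt_eq_rpow, ← Real.rpow_mul (by positivity)]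
  congr 1; ring

/-- For `n ∈ {1,2,3}` and `s > 0` there is `C > 0` such that
`∫ |k|^n B₀(k)² ω(k)^{2−2s} ω(p−k)^{−n} dk ≤ C` uniformly in `p ∈ ℝ³`. -/
theorem rearrangement_convolution_bound (n : ℕ) (hn : n = 1 ∨ n = 2 ∨ n = 3)
    (s : ℝ) (hs : 0 < s) :
    ∃ C > 0, ∀ p : EuclideanSpace ℝ (Fin 3),
      ∫⁻ k, ENNReal.ofReal
          (‖k‖ ^ n * B0 k ^ 2 * ω k ^ (2 - 2 * s) * ω (p - k) ^ (-(n : ℝ))) ≤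
        ENNReal.ofReal C := by
  have hi := om_int s hs
  have hnn : ∀ k : EuclideanSpace ℝ (Fin 3), 0 ≤ ω k ^ (-(3 + 2 * s)) := fun k =>
    Real.rpow_nonneg (by linarith [one_le_om k]) _
  have hI : 0 ≤ ∫ k : EuclideanSpace ℝ (Fin 3), ω k ^ (-(3 + 2 * s)) := integral_nonneg hnn
  refine ⟨(∫ k : EuclideanSpace ℝ (Fin 3), ω k ^ (-(3 + 2 * s))) +
    (∫ k : EuclideanSpace ℝ (Fin 3), ω k ^ (-(3 + 2 * s))) + 1, by linarith, fun p => ?_⟩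
  have hi' := hi.comp_sub_left p
  calc _ ≤ ∫⁻ k, ENNReal.ofReal (ω k ^ (-(3 + 2 * s)) + ω (p - k) ^ (-(3 + 2 * s))) :=
        lintegral_mono fun k => ENNReal.ofReal_le_ofReal
          (pointwise n (by omega) s hs p k)
    _ = ENNReal.ofReal (∫ k, (ω k ^ (-(3 + 2 * s)) + ω (p - k) ^ (-(3 + 2 * s)))) :=
        (ofReal_integral_eq_lintegral_ofReal (hi.add hi')
          (Filter.Eventually.of_forall fun k => add_nonneg (hnn k) (hnn (p - k)))).symm
    _ ≤ _ := by
        apply ENNReal.ofReal_le_ofReal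
        rw [integral_add hi hi',
          integral_sub_left_eq_self (fun k => ω k ^ (-(3 + 2 * s))) volume p]
        linarith

end
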